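/- The map x ↦ y^{δ(x)} preserves (∫_Q ·)-comparability: if m₀|x-x₀|^q ≤ s(x) ≤ M₀|x-x₀|^q near x₀ and w̃(x,y) = y^{1-2|x-x₀|^q}, w(x,y) = y^{1-2s(x)}, then for every cube Q contained in a sufficiently small neighborhood of (x₀,0) with 0 < y < 1 on Q, there exists c̃ > 0 (independent of Q) with (1/|Q| ∫_Q w)(1/|Q| ∫_Q w^{-1}) ≥ c̃ (1/|Q| ∫_Q w̃)(1/|Q| ∫_Q w̃^{-1}). -/

import Mathlib

open MeasureTheory Set

noncomputable def Gf (l H σ : ℝ) : ENNReal :=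
  ∫⁻ y in Ioo l H, ENNReal.ofReal ((y / H) ^ (2 * σ - 1))

lemma Gf_antitone {l H : ℝ} (hl : 0 ≤ l) (hlH : l < H) : Antitone (Gf l H) := by
  intro a b hab
  unfold Gf
  refine setLIntegral_mono' measurableSet_Ioo ?_
  intro y hy
  have hH : 0 < H := by linarith
  have hy0 : 0 < y := lt_of_le_of_lt hl hy.1
  apply ENNReal.ofReal_le_ofReal
  apply Real.rpow_le_rpow_of_exponent_ge (by positivity)
  · rw [div_le_one hH]; exact hy.2.le
  · linarith

lemma Gf_eq {l H σ : ℝ} (hl : 0 ≤ l) (hlH : l < H) (hσ : 0 < σ) :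
    Gf l H σ = ENNReal.ofReal (H * (1 - (l / H) ^ (2 * σ)) / (2 * σ)) := by
  have hH : 0 < H := by linarith
  unfold Gf
  have hii : IntervalIntegrable (fun y : ℝ => (y / H) ^ (2 * σ - 1)) volume l H := by
    have h := (intervalIntegral.intervalIntegrable_rpow' (r := 2 * σ - 1) (a := l) (b := H)
      (by linarith)).div_const (H ^ (2 * σ - 1))
    refine h.congr ?_
    intro y hy
    rw [uIoc_of_le hlH.le] at hy
    exact (Real.div_rpow (hl.trans hy.1.le) hH.le _).symm
  rw [← ofReal_integral_eq_lintegral_ofReal]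
  · congr 1
    rw [← integral_Ioc_eq_integral_Ioo, ← intervalIntegral.integral_of_le hlH.le,
      intervalIntegral.integral_comp_div (fun u : ℝ => u ^ (2 * σ - 1)) hH.ne',
      integral_rpow (Or.inl (by linarith)), div_self hH.ne']
    simp
    ring
  · exact ((intervalIntegrable_iff_integrableOn_Ioo_of_le hlH.le).1 hii)
  · refine (ae_restrict_iff' measurableSet_Ioo).2 (Filter.Eventually.of_forall ?_)
    intro y hy
    have hy0 : 0 < y := lt_of_le_of_lt hl hy.1
    simp only [Pi.zero_apply]
    positivity

lemma Gf_scale {l H σ M : ℝ} (hl : 0 ≤ l) (hlH : l < H) (hσ : 0 ≤ σ) (hM : 1 ≤ M) :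
    Gf l H σ ≤ ENNReal.ofReal M * Gf l H (M * σ) := by
  rcases hσ.eq_or_lt with rfl | hσ
  · rw [mul_zero]
    exact le_mul_of_one_le_left zero_le (by simpa using hM)
  have hH : 0 < H := by linarith
  have hM0 : 0 < M := by linarith
  rw [Gf_eq hl hlH hσ, Gf_eq hl hlH (by positivity), ← ENNReal.ofReal_mul hM0.le]
  apply ENNReal.ofReal_le_ofReal
  have e : M * (H * (1 - (l / H) ^ (2 * (M * σ))) / (2 * (M * σ)))
      = H * (1 - (l / H) ^ (2 * (M * σ))) / (2 * σ) := by
    field_simp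
  rw [e]
  have : (l / H) ^ (2 * (M * σ)) ≤ (l / H) ^ (2 * σ) := by
    apply Real.rpow_le_rpow_of_exponent_ge' (by positivity)
    · rw [div_le_one hH]; exact hlH.le
    · positivity
    · nlinarith
  gcongr

lemma B_eq {l H σ : ℝ} (hl : 0 ≤ l) (hlH : l < H) :
    ∫⁻ y in Ioo l H, ENNReal.ofReal (y ^ (2 * σ - 1))
      = ENNReal.ofReal (H ^ (2 * σ - 1)) * Gf l H σ := by
  have hH : 0 < H := by linarith
  unfold Gf
  rw [← lintegral_const_mul _ (by fun_prop)]
  refine setLIntegral_congr_fun measurableSet_Ioo ?_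
  intro y hy
  have hy0 : 0 < y := lt_of_le_of_lt hl hy.1
  simp only
  rw [← ENNReal.ofReal_mul (by positivity), Real.div_rpow hy0.le hH.le]
  congr 1
  have : H ^ (2 * σ - 1) ≠ 0 := by positivity
  field_simp

lemma A_le {l H σ : ℝ} (hl : 0 ≤ l) (hσ : σ ≤ 1 / 2) :
    ∫⁻ y in Ioo l H, ENNReal.ofReal (y ^ (1 - 2 * σ))
      ≤ ENNReal.ofReal (H - l) * ENNReal.ofReal (H ^ (1 - 2 * σ)) := by
  calc _ ≤ ∫⁻ y in Ioo l H, ENNReal.ofReal (H ^ (1 - 2 * σ)) := by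
        refine setLIntegral_mono' measurableSet_Ioo ?_
        intro y hy
        have hy0 : 0 < y := lt_of_le_of_lt hl hy.1
        apply ENNReal.ofReal_le_ofReal
        exact Real.rpow_le_rpow hy0.le hy.2.le (by linarith)
    _ = _ := by rw [setLIntegral_const, Real.volume_Ioo, mul_comm]

lemma A_ge {l H σ : ℝ} (hl : 0 ≤ l) (hlH : l < H) (hσ0 : 0 ≤ σ) (hσ : σ ≤ 1 / 2) :
    ENNReal.ofReal (H - l) * ENNReal.ofReal (H ^ (1 - 2 * σ)) ≤
    4 * ∫⁻ y in Ioo l H, ENNReal.ofReal (y ^ (1 - 2 * σ)) := by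
  have hH : 0 < H := by linarith
  have h1 : ∫⁻ y in Ioo ((l + H) / 2) H, ENNReal.ofReal (H ^ (1 - 2 * σ) / 2) ≤
      ∫⁻ y in Ioo l H, ENNReal.ofReal (y ^ (1 - 2 * σ)) := by
    calc _ ≤ ∫⁻ y in Ioo ((l + H) / 2) H, ENNReal.ofReal (y ^ (1 - 2 * σ)) := by
          refine setLIntegral_mono' measurableSet_Ioo ?_
          intro y hy
          have hy0 : H / 2 ≤ y := by linarith [hy.1]
          apply ENNReal.ofReal_le_ofReal
          calc H ^ (1 - 2 * σ) / 2 ≤ (H / 2) ^ (1 - 2 * σ) := by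
                rw [Real.div_rpow hH.le (by norm_num)]
                gcongr
                calc (2:ℝ) ^ (1 - 2 * σ) ≤ 2 ^ (1:ℝ) := 
                      Real.rpow_le_rpow_of_exponent_le (by norm_num) (by linarith)
                  _ = 2 := by simp
            _ ≤ _ := Real.rpow_le_rpow (by positivity) hy0 (by linarith)
      _ ≤ _ := lintegral_mono_set (Ioo_subset_Ioo_left (by linarith))
  rw [setLIntegral_const, Real.volume_Ioo] at h1
  calc _ = 4 * (ENNReal.ofReal (H ^ (1 - 2 * σ) / 2) * ENNReal.ofReal (H - (l + H) / 2)) := by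
        rw [← ENNReal.ofReal_mul (by linarith), ← ENNReal.ofReal_mul (by positivity),
          show (4:ENNReal) = ENNReal.ofReal 4 by simp, ← ENNReal.ofReal_mul (by norm_num)]
        congr 1
        ring
    _ ≤ _ := by gcongr

lemma osc {q : ℝ} (hq : 0 < q) : ∃ K : ℝ, 0 < K ∧ ∀ a b H : ℝ, 0 ≤ a → 0 ≤ b → a ≤ 1 → b ≤ 1 →
    0 < H → H ≤ 1 → a - b ≤ H → H ^ (1 - 2 * a ^ q) * H ^ (2 * b ^ q - 1) ≤ K := by
  obtain ⟨p, C, hp, hC, h⟩ : ∃ p C : ℝ, 0 < p ∧ 0 < C ∧ ∀ a b : ℝ, 0 ≤ b → b ≤ a → a ≤ 1 →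
      a ^ q - b ^ q ≤ C * (a - b) ^ p := by
    rcases le_total q 1 with h1 | h1
    · refine ⟨q, 1, hq, one_pos, ?_⟩
      intro a b hb hba ha
      have := Real.rpow_add_le_add_rpow (sub_nonneg.2 hba) hb hq.le h1
      rw [sub_add_cancel] at this
      linarith
    · refine ⟨1, q, one_pos, hq, ?_⟩
      intro a b hb hba ha
      rw [Real.rpow_one]
      rcases (hb.trans hba).eq_or_lt with h0 | h0
      · have : b = 0 := by linarith
        subst this; subst h0; simp
      have h2 := one_add_mul_self_le_rpow_one_add (s := b / a - 1) (by
        have : 0 ≤ b / a := by positivity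
        linarith) h1
      have h3 : b ^ q = a ^ q * (1 + (b / a - 1)) ^ q := by
        rw [← Real.mul_rpow h0.le]
        · congr 1; field_simp; ring
        · have : 0 ≤ b / a := by positivity
          linarith
      have h4 : a ^ q ≤ a := by
        calc a ^ q ≤ a ^ (1:ℝ) := Real.rpow_le_rpow_of_exponent_ge h0 ha h1
          _ = a := by simp
      have h5 : 0 < a ^ q := by positivity
      have h6 : a ^ q - b ^ q ≤ a ^ q * (q * (1 - b / a)) := by
        rw [h3]; nlinarith
      have h7 : 0 ≤ q * (1 - b / a) := by
        have : b / a ≤ 1 := by rw [div_le_one h0]; exact hba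
        exact mul_nonneg hq.le (by linarith)
      calc _ ≤ _ := h6
        _ ≤ a * (q * (1 - b / a)) := by gcongr
        _ = q * (a - b) := by field_simp
  refine ⟨Real.exp (2 * C / p), Real.exp_pos _, ?_⟩
  intro a b H ha hb ha1 hb1 hH hH1 hab
  rw [← Real.rpow_add hH, Real.rpow_def_of_pos hH]
  apply Real.exp_le_exp.2
  have hlog : 0 ≤ -Real.log H := by linarith [Real.log_nonpos hH.le hH1]
  rcases le_total a b with hle | hle
  · have : a ^ q ≤ b ^ q := Real.rpow_le_rpow ha hle hq.le
    have : 0 ≤ 2 * C / p := by positivity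
    nlinarith
  · have h1 := h a b hb hle ha1
    have h2 : (a - b) ^ p ≤ H ^ p := Real.rpow_le_rpow (by linarith) hab hp.le
    have h3 : -Real.log H ≤ (H⁻¹) ^ p / p := by
      rw [← Real.log_inv]; exact Real.log_le_rpow_div (by positivity) hp
    rw [Real.inv_rpow hH.le] at h3
    have h4 : 0 < H ^ p := by positivity
    calc Real.log H * (1 - 2 * a ^ q + (2 * b ^ q - 1)) = 2 * (a ^ q - b ^ q) * (-Real.log H) := by
          ring
      _ ≤ 2 * (C * H ^ p) * (-Real.log H) := by
          gcongr
          exact h1.trans (by gcongr)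
      _ ≤ 2 * (C * H ^ p) * ((H ^ p)⁻¹ / p) := by gcongr
      _ = _ := by field_simp

lemma cheb {α : Type*} [MeasurableSpace α] (μ : Measure α) (f g G : α → ENNReal)
    (hf : Measurable f) (hg : Measurable g) (hG : Measurable G)
    (h : ∀ x x', G x ≤ f x * (g x' * G x') + f x' * (g x * G x)) :
    μ univ * ∫⁻ x, G x ∂μ ≤ 2 * ((∫⁻ x, f x ∂μ) * ∫⁻ x, g x * G x ∂μ) := by
  have h1 : ∫⁻ x, ∫⁻ x', G x ∂μ ∂μ ≤
      ∫⁻ x, ∫⁻ x', (f x * (g x' * G x') + f x' * (g x * G x)) ∂μ ∂μ :=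
    lintegral_mono fun x => lintegral_mono fun x' => h x x'
  have h2 : ∀ x, ∫⁻ x', (f x * (g x' * G x') + f x' * (g x * G x)) ∂μ
      = f x * (∫⁻ x', g x' * G x' ∂μ) + (∫⁻ x', f x' ∂μ) * (g x * G x) := by
    intro x
    rw [lintegral_add_left (by fun_prop), lintegral_const_mul _ (by fun_prop),
      lintegral_mul_const _ hf]
  simp_rw [h2] at h1
  rw [lintegral_add_left (by fun_prop), lintegral_mul_const _ hf,
    lintegral_const_mul _ (by fun_prop)] at h1
  simp only [lintegral_const] at h1
  rw [lintegral_mul_const _ hG] at h1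
  rw [mul_comm, two_mul]
  exact h1

lemma osc_int {α : Type*} [MeasurableSpace α] (μ : Measure α) (f g G : α → ENNReal) (C : ENNReal)
    (S : Set α) (hS : MeasurableSet S)
    (hf : Measurable f) (hg : Measurable g) (hG : Measurable G)
    (h : ∀ x ∈ S, ∀ x' ∈ S, f x * g x' ≤ C) :
    (∫⁻ x in S, f x ∂μ) * (∫⁻ x in S, g x * G x ∂μ) ≤ C * (μ S * ∫⁻ x in S, G x ∂μ) := by
  rw [← lintegral_mul_const _ hf]
  calc _ ≤ ∫⁻ x in S, C * ∫⁻ x in S, G x ∂μ ∂μ := by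
        refine setLIntegral_mono' hS fun x hx => ?_
        rw [← lintegral_const_mul _ (by fun_prop), ← lintegral_const_mul _ (by fun_prop)]
        refine setLIntegral_mono' hS fun x' hx' => ?_
        rw [← mul_assoc]
        gcongr
        exact h x hx x' hx'
    _ = _ := by
        rw [setLIntegral_const]; ring

lemma slice {N : ℕ} (a : Fin N → ℝ) (h r : ℝ) (e : (Fin N → ℝ) → ℝ) (he : Measurable e)
    (hl : 0 ≤ h - r) :
    ∫ p in Metric.ball ((a, h) : (Fin N → ℝ) × ℝ) r, p.2 ^ (e p.1) ∂volume =
      (∫⁻ x in Metric.ball a r, ∫⁻ y in Ioo (h - r) (h + r),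
        ENNReal.ofReal (y ^ (e x))).toReal := by
  have hm : Measurable (fun p : (Fin N → ℝ) × ℝ => p.2 ^ (e p.1)) := by fun_prop
  rw [integral_eq_lintegral_of_nonneg_ae]
  · congr 1
    rw [← ball_prod_same, Real.ball_eq_Ioo, Measure.volume_eq_prod, ← Measure.prod_restrict,
      lintegral_prod _ hm.ennreal_ofReal.aemeasurable]
  · refine (ae_restrict_iff' Metric.isOpen_ball.measurableSet).2 (Filter.Eventually.of_forall ?_)
    intro p hp
    rw [← ball_prod_same, Real.ball_eq_Ioo] at hp
    have : 0 ≤ p.2 := by linarith [hp.2.1]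
    simp only [Pi.zero_apply]
    positivity
  · exact hm.aestronglyMeasurable

/-- The comparison in `ENNReal`, on the slices. -/
lemma core {N : ℕ} (s t : (Fin N → ℝ) → ℝ) (hs : Measurable s) (ht : Measurable t)
    (X : Set (Fin N → ℝ)) (hX : MeasurableSet X) (l H M K : ℝ)
    (hl : 0 ≤ l) (hlH : l < H) (hH1 : H ≤ 1) (hM : 1 ≤ M)
    (hs0 : ∀ x, 0 ≤ s x) (ht0 : ∀ x, 0 ≤ t x)
    (hs1 : ∀ x ∈ X, s x ≤ 1 / 2) (ht1 : ∀ x ∈ X, t x ≤ 1 / 2)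
    (hst : ∀ x ∈ X, s x ≤ M * t x)
    (hK : ∀ x ∈ X, ∀ x' ∈ X, H ^ (1 - 2 * t x) * H ^ (2 * t x' - 1) ≤ K) :
    (∫⁻ x in X, ∫⁻ y in Ioo l H, ENNReal.ofReal (y ^ (1 - 2 * t x))) *
      (∫⁻ x in X, ∫⁻ y in Ioo l H, ENNReal.ofReal (y ^ (2 * t x - 1))) ≤
    (ENNReal.ofReal K * ENNReal.ofReal M * 8) *
    ((∫⁻ x in X, ∫⁻ y in Ioo l H, ENNReal.ofReal (y ^ (1 - 2 * s x))) *
      (∫⁻ x in X, ∫⁻ y in Ioo l H, ENNReal.ofReal (y ^ (2 * s x - 1)))) := by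
  have hH : 0 < H := by linarith
  have hGm : Measurable (Gf l H) := (Gf_antitone hl hlH).measurable
  have hGs : Measurable (fun x => Gf l H (s x)) := hGm.comp hs
  have hGt : Measurable (fun x => Gf l H (t x)) := hGm.comp ht
  simp_rw [B_eq hl hlH]
  set D := ENNReal.ofReal (H - l)
  set Is := ∫⁻ x in X, ENNReal.ofReal (H ^ (1 - 2 * s x))
  set It := ∫⁻ x in X, ENNReal.ofReal (H ^ (1 - 2 * t x))
  set Js := ∫⁻ x in X, ENNReal.ofReal (H ^ (2 * s x - 1)) * Gf l H (s x)
  set Jt := ∫⁻ x in X, ENNReal.ofReal (H ^ (2 * t x - 1)) * Gf l H (t x)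
  have h1 : ∫⁻ x in X, ∫⁻ y in Ioo l H, ENNReal.ofReal (y ^ (1 - 2 * t x)) ≤ D * It := by
    rw [← lintegral_const_mul _ (by fun_prop)]
    exact setLIntegral_mono' hX fun x hx => A_le hl (ht1 x hx)
  have h2 : D * Is ≤ 4 * ∫⁻ x in X, ∫⁻ y in Ioo l H, ENNReal.ofReal (y ^ (1 - 2 * s x)) := by
    rw [← lintegral_const_mul _ (by fun_prop), ← lintegral_const_mul' _ _ (by simp)]
    exact setLIntegral_mono' hX fun x hx => A_ge hl hlH (hs0 x) (hs1 x hx)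
  have h3 : It * Jt ≤ ENNReal.ofReal K * (volume X * ∫⁻ x in X, Gf l H (t x)) := by
    refine osc_int volume _ _ _ _ X hX (by fun_prop) (by fun_prop) hGt ?_
    intro x hx x' hx'
    rw [← ENNReal.ofReal_mul (by positivity)]
    exact ENNReal.ofReal_le_ofReal (hK x hx x' hx')
  have h4 : ∫⁻ x in X, Gf l H (t x) ≤ ENNReal.ofReal M * ∫⁻ x in X, Gf l H (s x) := by
    rw [← lintegral_const_mul _ hGs]
    refine setLIntegral_mono' hX fun x hx => ?_
    refine (Gf_scale hl hlH (ht0 x) hM).trans ?_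
    gcongr
    exact Gf_antitone hl hlH (hst x hx)
  have h5 : volume X * ∫⁻ x in X, Gf l H (s x) ≤ 2 * (Is * Js) := by
    have := cheb (volume.restrict X) (fun x => ENNReal.ofReal (H ^ (1 - 2 * s x)))
      (fun x => ENNReal.ofReal (H ^ (2 * s x - 1))) (fun x => Gf l H (s x))
      (by fun_prop) (by fun_prop) hGs ?_
    · rwa [Measure.restrict_apply_univ] at this
    have key : ∀ x x', s x' ≤ s x →
        1 ≤ ENNReal.ofReal (H ^ (1 - 2 * s x)) * ENNReal.ofReal (H ^ (2 * s x' - 1)) := by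
      intro x x' hxx
      rw [← ENNReal.ofReal_mul (by positivity), ← Real.rpow_add hH, ENNReal.one_le_ofReal]
      exact Real.one_le_rpow_of_pos_of_le_one_of_nonpos hH hH1 (by linarith)
    intro x x'
    rw [← mul_assoc, ← mul_assoc]
    rcases le_total (s x') (s x) with hxx | hxx
    · refine le_trans ?_ le_self_add
      refine (Gf_antitone hl hlH hxx).trans ?_
      exact le_mul_of_one_le_left zero_le (key x x' hxx)
    · refine le_trans ?_ le_add_self
      exact le_mul_of_one_le_left zero_le (key x' x hxx)
  set As := ∫⁻ x in X, ∫⁻ y in Ioo l H, ENNReal.ofReal (y ^ (1 - 2 * s x))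
  calc _ ≤ (D * It) * Jt := by gcongr
    _ = D * (It * Jt) := by ring
    _ ≤ D * (ENNReal.ofReal K * (volume X * (ENNReal.ofReal M * ∫⁻ x in X, Gf l H (s x)))) := by
        refine mul_le_mul_right (h3.trans ?_) _
        gcongr
    _ = D * ENNReal.ofReal K * ENNReal.ofReal M * (volume X * ∫⁻ x in X, Gf l H (s x)) := by ring
    _ ≤ D * ENNReal.ofReal K * ENNReal.ofReal M * (2 * (Is * Js)) := by gcongr
    _ = ENNReal.ofReal K * ENNReal.ofReal M * 2 * ((D * Is) * Js) := by ring
    _ ≤ ENNReal.ofReal K * ENNReal.ofReal M * 2 * ((4 * As) * Js) := by gcongr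
    _ = _ := by ring

/-- finiteness transfers. -/
lemma core_fin {N : ℕ} (s t : (Fin N → ℝ) → ℝ) (ht : Measurable t)
    (X : Set (Fin N → ℝ)) (hX : MeasurableSet X) (l H m : ℝ)
    (hl : 0 ≤ l) (hlH : l < H) (hH1 : H ≤ 1) (hm : 0 < m) (hm1 : m ≤ 1)
    (hs0 : ∀ x, 0 ≤ s x) (ht0 : ∀ x, 0 ≤ t x) (ht1 : ∀ x ∈ X, t x ≤ 1 / 2)
    (hst : ∀ x ∈ X, m * t x ≤ s x)
    (hfin : ∫⁻ x in X, ∫⁻ y in Ioo l H, ENNReal.ofReal (y ^ (2 * t x - 1)) ≠ ⊤) :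
    ∫⁻ x in X, ∫⁻ y in Ioo l H, ENNReal.ofReal (y ^ (2 * s x - 1)) ≠ ⊤ := by
  have hH : 0 < H := by linarith
  have hGt : Measurable (fun x => Gf l H (t x)) := (Gf_antitone hl hlH).measurable.comp ht
  simp_rw [B_eq hl hlH] at hfin ⊢
  refine ne_top_of_le_ne_top (ENNReal.mul_ne_top
    (ENNReal.ofReal_ne_top (r := H ^ (-1:ℝ) * m⁻¹)) hfin) ?_
  rw [← lintegral_const_mul' _ _ ENNReal.ofReal_ne_top]
  refine setLIntegral_mono' hX fun x hx => ?_
  have e : m⁻¹ * (m * t x) = t x := by field_simp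
  have h1 : Gf l H (s x) ≤ ENNReal.ofReal m⁻¹ * Gf l H (t x) := by
    refine (Gf_antitone hl hlH (hst x hx)).trans ?_
    have := Gf_scale (M := m⁻¹) hl hlH (mul_nonneg hm.le (ht0 x)) ((one_le_inv₀ hm).2 hm1)
    rwa [e] at this
  have h2 : Gf l H (t x) ≤ ENNReal.ofReal (H ^ (2 * t x - 1)) * Gf l H (t x) := by
    refine le_mul_of_one_le_left zero_le ?_
    rw [ENNReal.one_le_ofReal]
    exact Real.one_le_rpow_of_pos_of_le_one_of_nonpos hH hH1 (by linarith [ht1 x hx])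
  rw [ENNReal.ofReal_mul (by positivity), mul_assoc]
  have h3 : H ^ (2 * s x - 1) ≤ H ^ (-1:ℝ) :=
    Real.rpow_le_rpow_of_exponent_ge hH hH1 (by linarith [hs0 x])
  gcongr
  refine h1.trans ?_
  gcongr

/-- comparison step of the non-`A₂` proof.  If
`m₀|x-x₀|^q ≤ s(x) ≤ M₀|x-x₀|^q` for `|x-x₀| ≤ R₀`, and `w(x,y) = y^(1-2 s x)`,
`w̃(x,y) = y^(1-2|x-x₀|^q)`, then there are `c̃ > 0` and a radius `ρ > 0` such that for
every cube `Q` (sup-norm ball) contained in the `ρ`-neighborhood of `(x₀,0)` and in the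
strip `0 < y < 1`, the `A₂` product of averages of `w` dominates `c̃` times that of `w̃`. -/
theorem A2_product_comparison
    {N : ℕ} (Ω : Set (Fin N → ℝ)) (hΩopen : IsOpen Ω)
    (s : (Fin N → ℝ) → ℝ) (hs : Measurable s) (hs01 : ∀ x, s x ∈ Icc (0:ℝ) 1)
    (x₀ : Fin N → ℝ) (hx₀ : x₀ ∈ Ω)
    (q R₀ m₀ M₀ : ℝ) (hq : 0 < q) (hR₀ : 0 < R₀) (hm₀ : 0 < m₀) (hM₀ : 0 < M₀)
    (hsand : ∀ x : Fin N → ℝ, ‖x - x₀‖ ≤ R₀ →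
      m₀ * ‖x - x₀‖ ^ q ≤ s x ∧ s x ≤ M₀ * ‖x - x₀‖ ^ q) :
    ∃ ctilde ρ : ℝ, 0 < ctilde ∧ 0 < ρ ∧
      ∀ (z : (Fin N → ℝ) × ℝ) (r : ℝ), 0 < r →
        Metric.ball z r ⊆ Metric.ball ((x₀, 0) : (Fin N → ℝ) × ℝ) ρ →
        Metric.ball z r ⊆ {p : (Fin N → ℝ) × ℝ | p.2 ∈ Ioo (0:ℝ) 1} →
        ctilde *
            (((volume (Metric.ball z r)).toReal)⁻¹ *
                (∫ p in Metric.ball z r, p.2 ^ (1 - 2 * ‖p.1 - x₀‖ ^ q) ∂volume) *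
              (((volume (Metric.ball z r)).toReal)⁻¹ *
                (∫ p in Metric.ball z r, p.2 ^ (2 * ‖p.1 - x₀‖ ^ q - 1) ∂volume))) ≤
          ((volume (Metric.ball z r)).toReal)⁻¹ *
              (∫ p in Metric.ball z r, p.2 ^ (1 - 2 * s p.1) ∂volume) *
            (((volume (Metric.ball z r)).toReal)⁻¹ *
              (∫ p in Metric.ball z r, p.2 ^ (2 * s p.1 - 1) ∂volume)) := by
  obtain ⟨K, hK0, hK⟩ := osc hq
  set M := max M₀ 1 with hMdef
  have hM1 : 1 ≤ M := le_max_right _ _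
  have hM : 0 < M := by linarith
  set m := min m₀ 1 with hmdef
  have hm : 0 < m := lt_min hm₀ one_pos
  set ρ := min R₀ (min (1 / 2) ((1 / (2 * M)) ^ (1 / q))) with hρdef
  have hρ : 0 < ρ := by
    refine lt_min hR₀ (lt_min (by norm_num) (by positivity))
  have hρR : ρ ≤ R₀ := min_le_left _ _
  have hρ1 : ρ ≤ 1 := ((min_le_right _ _).trans (min_le_left _ _)).trans (by norm_num)
  have hρq : M * ρ ^ q ≤ 1 / 2 := by
    have h1 : ρ ≤ (1 / (2 * M)) ^ (1 / q) := (min_le_right _ _).trans (min_le_right _ _)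
    have h2 : ρ ^ q ≤ 1 / (2 * M) := by
      calc ρ ^ q ≤ ((1 / (2 * M)) ^ (1 / q)) ^ q := Real.rpow_le_rpow hρ.le h1 hq.le
        _ = 1 / (2 * M) := by
          rw [← Real.rpow_mul (by positivity), one_div_mul_cancel hq.ne', Real.rpow_one]
    calc M * ρ ^ q ≤ M * (1 / (2 * M)) := by gcongr
      _ = 1 / 2 := by field_simp
  refine ⟨(K * M * 8)⁻¹, ρ, by positivity, hρ, ?_⟩
  rintro ⟨a, h⟩ r hr hsub hstrip
  have hstr : Ioo (h - r) (h + r) ⊆ Ioo (0:ℝ) 1 := by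
    intro y hy
    have : ((a, y) : (Fin N → ℝ) × ℝ) ∈ Metric.ball (a, h) r := by
      rw [← ball_prod_same, Real.ball_eq_Ioo]
      exact ⟨Metric.mem_ball_self hr, hy⟩
    exact hstrip this
  obtain ⟨hl, hH1⟩ := (Ioo_subset_Ioo_iff (by linarith)).1 hstr
  have hlH : h - r < h + r := by linarith
  have hXρ : ∀ x ∈ Metric.ball a r, ‖x - x₀‖ < ρ := by
    intro x hx
    have : ((x, h) : (Fin N → ℝ) × ℝ) ∈ Metric.ball (a, h) r := by
      rw [← ball_prod_same]
      exact ⟨hx, Metric.mem_ball_self hr⟩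
    have h2 := hsub this
    rw [← ball_prod_same] at h2
    exact mem_ball_iff_norm.1 h2.1
  set t : (Fin N → ℝ) → ℝ := fun x => ‖x - x₀‖ ^ q with htdef
  have htm : Measurable t := by fun_prop
  have ht0 : ∀ x, 0 ≤ t x := fun x => by positivity
  have hs0 : ∀ x, 0 ≤ s x := fun x => (hs01 x).1
  have hMt : ∀ x ∈ Metric.ball a r, M * t x ≤ 1 / 2 := fun x hx =>
    le_trans (mul_le_mul_of_nonneg_left
      (Real.rpow_le_rpow (norm_nonneg _) (hXρ x hx).le hq.le) hM.le) hρq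
  have ht1 : ∀ x ∈ Metric.ball a r, t x ≤ 1 / 2 := fun x hx =>
    le_trans (le_mul_of_one_le_left (ht0 x) hM1) (hMt x hx)
  have hst : ∀ x ∈ Metric.ball a r, s x ≤ M * t x := fun x hx =>
    ((hsand x ((hXρ x hx).le.trans hρR)).2).trans
      (mul_le_mul_of_nonneg_right (le_max_left _ _) (ht0 x))
  have hts : ∀ x ∈ Metric.ball a r, m * t x ≤ s x := fun x hx =>
    le_trans (mul_le_mul_of_nonneg_right (min_le_left _ _) (ht0 x))
      ((hsand x ((hXρ x hx).le.trans hρR)).1)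
  have hs1 : ∀ x ∈ Metric.ball a r, s x ≤ 1 / 2 := fun x hx => (hst x hx).trans (hMt x hx)
  have hX : MeasurableSet (Metric.ball a r) := Metric.isOpen_ball.measurableSet
  have hKt : ∀ x ∈ Metric.ball a r, ∀ x' ∈ Metric.ball a r,
      (h + r) ^ (1 - 2 * t x) * (h + r) ^ (2 * t x' - 1) ≤ K := by
    intro x hx x' hx'
    refine hK _ _ _ (norm_nonneg _) (norm_nonneg _) ((hXρ x hx).le.trans hρ1)
      ((hXρ x' hx').le.trans hρ1) (by linarith) hH1 ?_
    have h1 : ‖x - x₀‖ - ‖x' - x₀‖ ≤ ‖x - x'‖ := by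
      have := norm_sub_norm_le (x - x₀) (x' - x₀)
      rwa [sub_sub_sub_cancel_right] at this
    have h2 : dist x x' ≤ dist x a + dist x' a := dist_triangle_right _ _ _
    rw [dist_eq_norm] at h2
    have h3 := Metric.mem_ball.1 hx
    have h4 := Metric.mem_ball.1 hx'
    linarith
  have hcore := core s t hs htm (Metric.ball a r) hX (h - r) (h + r) M K hl hlH hH1 hM1
    hs0 ht0 hs1 ht1 hst hKt
  have hfin := core_fin s t htm (Metric.ball a r) hX (h - r) (h + r) m hl hlH hH1 hm
    (min_le_right _ _) hs0 ht0 ht1 hts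
  have hPs : ∫⁻ x in Metric.ball a r, ∫⁻ y in Ioo (h - r) (h + r),
      ENNReal.ofReal (y ^ (1 - 2 * s x)) ≠ ⊤ := by
    refine ne_top_of_le_ne_top (b := ∫⁻ x in Metric.ball a r, ENNReal.ofReal (h + r - (h - r)))
      ?_ ?_
    · rw [setLIntegral_const]
      exact ENNReal.mul_ne_top ENNReal.ofReal_ne_top measure_ball_lt_top.ne
    · refine setLIntegral_mono' hX fun x hx => ?_
      refine (A_le hl (hs1 x hx)).trans ?_
      refine mul_le_of_le_one_right zero_le ?_
      rw [ENNReal.ofReal_le_one]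
      exact Real.rpow_le_one (by linarith) hH1 (by linarith [hs1 x hx])
  have e1 := slice a h r (fun x => 1 - 2 * t x) (by fun_prop) hl
  have e2 := slice a h r (fun x => 2 * t x - 1) (by fun_prop) hl
  have e3 := slice a h r (fun x => 1 - 2 * s x) (by fun_prop) hl
  have e4 := slice a h r (fun x => 2 * s x - 1) (by fun_prop) hl
  simp only [htdef] at e1 e2
  rw [e1, e2, e3, e4]
  simp only [htdef] at hcore hfin
  generalize (∫⁻ x in Metric.ball a r, ∫⁻ y in Ioo (h - r) (h + r),
      ENNReal.ofReal (y ^ (1 - 2 * s x))) = Ps at *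
  generalize (∫⁻ x in Metric.ball a r, ∫⁻ y in Ioo (h - r) (h + r),
      ENNReal.ofReal (y ^ (2 * s x - 1))) = Qs at *
  generalize (∫⁻ x in Metric.ball a r, ∫⁻ y in Ioo (h - r) (h + r),
      ENNReal.ofReal (y ^ (1 - 2 * ‖x - x₀‖ ^ q))) = Pt at *
  generalize (∫⁻ x in Metric.ball a r, ∫⁻ y in Ioo (h - r) (h + r),
      ENNReal.ofReal (y ^ (2 * ‖x - x₀‖ ^ q - 1))) = Qt at *
  generalize (volume (Metric.ball ((a, h) : (Fin N → ℝ) × ℝ) r)).toReal = V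
  have main : Pt.toReal * Qt.toReal ≤ K * M * 8 * (Ps.toReal * Qs.toReal) := by
    by_cases hQ : Qt = ⊤
    · rw [hQ, ENNReal.toReal_top, mul_zero]
      positivity
    have hQs := hfin hQ
    have := ENNReal.toReal_mono (ENNReal.mul_ne_top (ENNReal.mul_ne_top (ENNReal.mul_ne_top
      ENNReal.ofReal_ne_top ENNReal.ofReal_ne_top) (by simp)) (ENNReal.mul_ne_top hPs hQs)) hcore
    simpa [ENNReal.toReal_mul, ENNReal.toReal_ofReal hK0.le, ENNReal.toReal_ofReal hM.le] using this
  have hC : 0 < K * M * 8 := by positivity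
  calc (K * M * 8)⁻¹ * (V⁻¹ * Pt.toReal * (V⁻¹ * Qt.toReal))
      = (K * M * 8)⁻¹ * (V⁻¹ * V⁻¹) * (Pt.toReal * Qt.toReal) := by ring
    _ ≤ (K * M * 8)⁻¹ * (V⁻¹ * V⁻¹) * (K * M * 8 * (Ps.toReal * Qs.toReal)) := by
        have : 0 ≤ V⁻¹ * V⁻¹ := mul_self_nonneg _
        gcongr
    _ = ((K * M * 8)⁻¹ * (K * M * 8)) * (V⁻¹ * Ps.toReal * (V⁻¹ * Qs.toReal)) := by ring
    _ = _ := by rw [inv_mul_cancel₀ hC.ne', one_mul]
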